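/- Kučera: For every A ∈ 2^ω with ∅' ≤_T A there is a Martin-Löf random R ∈ 2^ω with R ≡_T A; hence every Turing degree above the degree of the halting problem contains a Martin-Löf random sequence. -/

import Mathlib

open scoped ENNReal NNReal Classical

namespace AR

/-- Elements of Cantor space `2^ω`: infinite binary sequences. -/
abbrev Seq := ℕ → Bool

/-- Finite binary strings `2^{<ω}`. -/
abbrev Str := List Bool

/-- The first `n` bits of a sequence `A`, as a finite string (`A↾n`). -/
def pre (A : Seq) (n : ℕ) : Str := List.ofFn fun i : Fin n => A i

/-- The basic clopen cylinder `[σ]` of all sequences extending `σ`. -/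
def cyl (σ : Str) : Set Seq := {A | pre A σ.length = σ}

/-- A measure on Cantor space is *fair-coin* if every cylinder `[σ]` has measure
`2^{-|σ|}`; this uniquely characterizes the usual product measure `μ` on `2^ω`. -/
def FairCoin (μ : MeasureTheory.Measure Seq) : Prop :=
  ∀ σ : Str, μ (cyl σ) = (2 : ℝ≥0∞)⁻¹ ^ σ.length

/-- A machine is a partial computable function `2^{<ω} ⇀ 2^{<ω}`. -/
def IsMachine (M : Str →. Str) : Prop := Partrec M

/-- Kolmogorov complexity of `τ` relative to the machine `M`:
`C_M(τ) = min{|σ| : M(σ)↓ = τ}`, with value `∞` if no such `σ` exists. -/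
noncomputable def Cplx (M : Str →. Str) (τ : Str) : ℕ∞ :=
  sInf ((fun σ : Str => (σ.length : ℕ∞)) '' {σ | τ ∈ M σ})

/-- A universal machine: a machine simulating every machine up to an additive
constant.  `Cplx U` for universal `U` is plain Kolmogorov complexity `C`. -/
def UniversalMachine (U : Str →. Str) : Prop :=
  IsMachine U ∧ ∀ M : Str →. Str, IsMachine M → ∃ c : ℕ, ∀ τ, Cplx U τ ≤ Cplx M τ + c

/-- A set of strings is prefix-free if none of its elements is a proper initial
segment of another. -/
def PrefixFree (S : Set Str) : Prop :=
  ∀ σ ∈ S, ∀ τ ∈ S, σ <+: τ → σ = τ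

/-- A prefix-free machine: a machine whose domain is prefix-free. -/
def PrefixFreeMachine (M : Str →. Str) : Prop :=
  IsMachine M ∧ PrefixFree {σ | (M σ).Dom}

/-- A universal prefix-free machine.  `Cplx U` for such `U` is prefix-free
Kolmogorov complexity `K`. -/
def UniversalPFMachine (U : Str →. Str) : Prop :=
  PrefixFreeMachine U ∧
    ∀ M : Str →. Str, PrefixFreeMachine M → ∃ c : ℕ, ∀ τ, Cplx U τ ≤ Cplx M τ + c

/-- A c.e. (recursively enumerable) predicate. -/
def CEPred {α} [Primcodable α] (p : α → Prop) : Prop :=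
  Partrec fun a => Part.assert (p a) fun _ => Part.some ()

/-- A Martin-Löf test: a sequence of uniformly Σ⁰₁ classes `U i`, given by a single
c.e. set `W` of pairs, with `μ (U i) ≤ 2^{-i}`. -/
def MLTest (μ : MeasureTheory.Measure Seq) (U : ℕ → Set Seq) : Prop :=
  ∃ W : Set (ℕ × Str), CEPred (· ∈ W) ∧
    (∀ i, U i = ⋃ σ ∈ {σ : Str | (i, σ) ∈ W}, cyl σ) ∧
    ∀ i, μ (U i) ≤ (2 : ℝ≥0∞)⁻¹ ^ i

/-- `A` is Martin-Löf random if it passes every Martin-Löf test. -/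
def MLRandom (μ : MeasureTheory.Measure Seq) (A : Seq) : Prop :=
  ∀ U : ℕ → Set Seq, MLTest μ U → A ∉ ⋂ i, U i

/-- Oracle partial recursion: `RecIn O f` means that the partial function
`f : ℕ ⇀ ℕ` is partial recursive relative to the oracle `O`
(Mathlib's `Nat.RecursiveIn`). -/
inductive RecIn (O : ℕ →. ℕ) : (ℕ →. ℕ) → Prop
  | zero : RecIn O (pure 0)
  | succ : RecIn O Nat.succ
  | left : RecIn O ↑fun n : ℕ => n.unpair.1
  | right : RecIn O ↑fun n : ℕ => n.unpair.2
  | oracle : RecIn O O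
  | pair {f g} : RecIn O f → RecIn O g → RecIn O fun n => Nat.pair <$> f n <*> g n
  | comp {f g} : RecIn O f → RecIn O g → RecIn O fun n => g n >>= f
  | prec {f g} : RecIn O f → RecIn O g → RecIn O (Nat.unpaired fun a n =>
      n.rec (f a) fun y IH => do let i ← IH; g (Nat.pair a (Nat.pair y i)))
  | rfind {f} : RecIn O f →
      RecIn O fun a => Nat.rfind fun n => (fun m => m = 0) <$> f (Nat.pair a n)

/-- The characteristic-function oracle associated to a sequence `A ∈ 2^ω`. -/
def oracleOf (A : Seq) : ℕ →. ℕ := fun n => Part.some (cond (A n) 1 0)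

/-- The characteristic-function oracle associated to a set of naturals. -/
noncomputable def oracleOfSet (S : Set ℕ) : ℕ →. ℕ :=
  fun n => Part.some (if n ∈ S then 1 else 0)

/-- Relative partial computability for partial functions between coded types. -/
def PartrecIn (O : ℕ →. ℕ) {α σ} [Primcodable α] [Primcodable σ] (f : α →. σ) : Prop :=
  RecIn O fun n =>
    Part.bind (Encodable.decode (α := α) n) fun a => (f a).map Encodable.encode

/-- A predicate is c.e. relative to the oracle `O`. -/
def CEPredIn (O : ℕ →. ℕ) {α} [Primcodable α] (p : α → Prop) : Prop :=
  PartrecIn O fun a => Part.assert (p a) fun _ => Part.some ()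

/-- Turing reducibility between oracles: `f` is recursive in `g`. -/
def TuringLE (f g : ℕ →. ℕ) : Prop := RecIn g f

/-- Turing reducibility `B ≤_T A` between sequences. -/
def SeqTuringLE (B A : Seq) : Prop := TuringLE (oracleOf B) (oracleOf A)

/-- The `e`-th partial computable function `φ_e`, via Mathlib's standard
enumeration of codes for the partial recursive functions. -/
def phi (e : ℕ) : ℕ →. ℕ := (Denumerable.ofNat Nat.Partrec.Code e).eval

/-- The halting problem `∅' = {e : φ_e(e)↓}`. -/
def haltingSet : Set ℕ := {e | (phi e e).Dom}

/-- A Martin-Löf test relative to the oracle `O`. -/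
def MLTestIn (O : ℕ →. ℕ) (μ : MeasureTheory.Measure Seq) (U : ℕ → Set Seq) : Prop :=
  ∃ W : Set (ℕ × Str), CEPredIn O (· ∈ W) ∧
    (∀ i, U i = ⋃ σ ∈ {σ : Str | (i, σ) ∈ W}, cyl σ) ∧
    ∀ i, μ (U i) ≤ (2 : ℝ≥0∞)⁻¹ ^ i

/-- Martin-Löf randomness relative to the oracle `O`. -/
def MLRandomIn (O : ℕ →. ℕ) (μ : MeasureTheory.Measure Seq) (A : Seq) : Prop :=
  ∀ U : ℕ → Set Seq, MLTestIn O μ U → A ∉ ⋂ i, U i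

/-!
Some c.e. set of strings generates an open class `G` of measure less than `1` outside of which every
sequence is Martin-Löf random. Call a string `σ` *thick* at level `m` if at least the fraction
`2^{-m}` of its cylinder avoids `G`. Counting measure, a thick string has at least two extensions of
a suitable length which are thick at level `m + 1`, so passing to the first or to the last of them
codes one bit of `A`. Failure of thickness is c.e., so `A`, which computes `∅'`, can carry out the
coding; the limit `R` of the coding strings avoids `G`. Conversely `R` computes `A`: once the chosen
extension is known, one waits until all its rivals on one side have been seen not to be thick, and
by the existence of a second thick extension this happens on one side only.
-/

section RelativeComputability
open Encodable

variable {O : ℕ →. ℕ} {α β γ : Type*} [Primcodable α] [Primcodable β] [Primcodable γ]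

theorem RecIn.of_eq {f g : ℕ →. ℕ} (hf : RecIn O f) (h : ∀ n, f n = g n) : RecIn O g :=
  (funext h : f = g) ▸ hf

theorem RecIn.of_partrec {f : ℕ →. ℕ} (hf : Nat.Partrec f) : RecIn O f := by
  induction hf with
  | zero => exact .zero
  | succ => exact .succ
  | left => exact .left
  | right => exact .right
  | pair _ _ ihf ihg => exact .pair ihf ihg
  | comp _ _ ihf ihg => exact .comp ihf ihg
  | prec _ _ ihf ihg => exact .prec ihf ihg
  | rfind _ ihf => exact .rfind ihf

/-- The total function `f` is computable relative to the oracle `O`. -/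
def ComputableIn (O : ℕ →. ℕ) (f : α → β) : Prop := PartrecIn O fun a => Part.some (f a)

theorem ComputableIn.of_eq {f g : α → β} (hf : ComputableIn O f) (h : ∀ a, f a = g a) :
    ComputableIn O g :=
  (funext h : f = g) ▸ hf

theorem ComputableIn.of_primrec {f : α → β} (hf : Primrec f) : ComputableIn O f :=
  RecIn.of_partrec hf.to_comp

theorem ComputableIn.comp {f : β → γ} {g : α → β} (hf : ComputableIn O f)
    (hg : ComputableIn O g) : ComputableIn O fun a => f (g a) :=
  (RecIn.comp hf hg).of_eq fun n => by
    cases decode (α := α) n <;> simp [encodek]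

theorem ComputableIn.pair {f : α → β} {g : α → γ} (hf : ComputableIn O f)
    (hg : ComputableIn O g) : ComputableIn O fun a => (f a, g a) :=
  (RecIn.pair hf hg).of_eq fun n => by
    cases decode (α := α) n <;> simp [Seq.seq]

theorem ComputableIn.nat_rec (b : β) {g : ℕ × β → β} (hg : ComputableIn O g) :
    ComputableIn O fun n : ℕ => (n.rec b fun k ih => g (k, ih) : β) := by
  have hconst (c : ℕ) : RecIn O fun _ => Part.some c :=
    .of_partrec (.of_primrec (Nat.Primrec.const c))
  have hid : RecIn O fun n => Part.some n := .of_partrec .some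
  refine (RecIn.comp (.prec (hconst (encode b)) (.comp hg .right)) (.pair (hconst 0) hid)).of_eq
    fun n => ?_
  simp only [Seq.seq, Part.map_eq_map, Part.map_some, Part.bind_some, Part.bind_eq_bind,
    Part.coe_some, decode_nat, Nat.unpaired, Nat.unpair_pair, PFun.coe_val, decode_prod_val,
    Option.bind_some]
  induction n with
  | zero => rfl
  | succ k ih => simp [ih, encodek]

theorem ComputableIn.nat_find {p : α → ℕ → Bool} (hp : ComputableIn O fun x : α × ℕ => p x.1 x.2)
    (h : ∀ a, ∃ n, p a n = true) : ComputableIn O fun a => Nat.find (h a) := by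
  have hzero : ComputableIn O fun x : α × ℕ => cond (p x.1 x.2) 0 1 :=
    (ComputableIn.of_primrec (Primrec.dom_bool fun b => cond b 0 1)).comp hp
  refine (RecIn.rfind hzero).of_eq fun n => ?_
  rcases hn : decode (α := α) n with - | a
  · simpa [hn] using Nat.rfind_zero_none _ rfl
  · simp only [decode_prod_val, Nat.unpair_pair, hn, Part.coe_some, Part.bind_some, Part.map_some,
      encode_nat, decode_nat, Option.bind_some, Option.map_some, Part.map_eq_map]
    refine Part.eq_some_iff.2 (Nat.mem_rfind.2 ⟨?_, fun {m} hm => ?_⟩)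
    · simp [Nat.find_spec (h a)]
    · simp [Nat.find_min (h a) hm]

theorem computableIn_iff_turingLE {f : ℕ → Bool} : ComputableIn O f ↔ TuringLE (oracleOf f) O := by
  have hcode : (fun n => Part.bind (decode (α := ℕ) n) fun a => (Part.some (f a)).map encode) =
      oracleOf f := by
    funext n
    cases h : f n <;> simp [oracleOf, h]
  unfold ComputableIn PartrecIn TuringLE
  rw [hcode]

theorem computableIn_oracleOf (A : Seq) : ComputableIn (oracleOf A) A :=
  computableIn_iff_turingLE.2 .oracle

/-- The predicate `p` is decidable relative to the oracle `O`. -/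
def DecidableIn (O : ℕ →. ℕ) (p : α → Prop) : Prop := ComputableIn O fun a => decide (p a)

theorem DecidableIn.of_primrecPred {p : α → Prop} (hp : PrimrecPred p) : DecidableIn O p :=
  .of_primrec hp.decide

theorem DecidableIn.comp {p : β → Prop} {f : α → β} (hp : DecidableIn O p)
    (hf : ComputableIn O f) : DecidableIn O fun a => p (f a) :=
  ComputableIn.comp hp hf

theorem DecidableIn.not {p : α → Prop} (hp : DecidableIn O p) : DecidableIn O fun a => ¬p a :=
  ((ComputableIn.of_primrec Primrec.not).comp hp).of_eq fun _ => by simp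

theorem DecidableIn.and {p q : α → Prop} (hp : DecidableIn O p) (hq : DecidableIn O q) :
    DecidableIn O fun a => p a ∧ q a :=
  ((ComputableIn.of_primrec (Primrec₂.uncurry.2 Primrec.and)).comp (hp.pair hq)).of_eq fun _ => by
    simp

theorem DecidableIn.imp {p q : α → Prop} (hp : DecidableIn O p) (hq : DecidableIn O q) :
    DecidableIn O fun a => p a → q a :=
  (hp.and hq.not).not.of_eq fun _ => by simp

theorem DecidableIn.exists_choice [Inhabited β] {q : α × β → Prop} (hq : DecidableIn O q)
    (h : ∀ a, ∃ b, q (a, b)) : ∃ f : α → β, ComputableIn O f ∧ ∀ a, q (a, f a) := by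
  let ofCode (n : ℕ) : β := (decode n).getD default
  have hofCode : Primrec ofCode := Primrec.option_getD.comp Primrec.decode (Primrec.const default)
  have hcode : ∀ a, ∃ n, decide (q (a, ofCode n)) = true := fun a => by
    obtain ⟨b, hb⟩ := h a
    exact ⟨encode b, by simpa [ofCode] using hb⟩
  have hdec : DecidableIn O fun x : α × ℕ => q (x.1, ofCode x.2) :=
    hq.comp (.of_primrec (Primrec.fst.pair (hofCode.comp Primrec.snd)))
  exact ⟨fun a => ofCode (Nat.find (hcode a)),
    (ComputableIn.of_primrec hofCode).comp
      (ComputableIn.nat_find (p := fun a n => decide (q (a, ofCode n))) hdec hcode),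
    fun a => of_decide_eq_true (Nat.find_spec (hcode a))⟩

theorem DecidableIn.exists_chain {P : ℕ × β → Prop} {r : (ℕ × β) × β → Prop}
    (hP : DecidableIn O P) (hr : DecidableIn O r) {x₀ : β} (hx₀ : P (0, x₀))
    (hstep : ∀ k x, P (k, x) → ∃ y, P (k + 1, y) ∧ r ((k, x), y)) :
    ∃ s : ℕ → β, ComputableIn O s ∧ ∀ k, P (k, s k) ∧ r ((k, s k), s (k + 1)) := by
  have : Inhabited β := ⟨x₀⟩
  have hq : DecidableIn O fun z : (ℕ × β) × β => P z.1 → P (z.1.1 + 1, z.2) ∧ r z :=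
    (hP.comp (.of_primrec .fst)).imp
      ((hP.comp (.of_primrec ((Primrec.succ.comp (Primrec.fst.comp .fst)).pair .snd))).and hr)
  obtain ⟨next, hnext, hspec⟩ := hq.exists_choice fun x => by
    by_cases hx : P x
    · exact (hstep x.1 x.2 hx).imp fun y hy _ => hy
    · exact ⟨x₀, fun h => absurd h hx⟩
  let s : ℕ → β := fun n => n.rec x₀ fun k ih => next (k, ih)
  have hs : ∀ k, P (k, s k) := fun k => by
    induction k with
    | zero => exact hx₀
    | succ k ih => exact (hspec (k, s k) ih).1
  exact ⟨s, .nat_rec x₀ hnext, fun k => ⟨hs k, (hspec (k, s k) (hs k)).2⟩⟩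

end RelativeComputability

section ComputablyEnumerable
open Encodable
open Nat.Partrec (Code)

variable {α β γ : Type*} [Primcodable α] [Primcodable β] [Primcodable γ]

theorem CEPred.exists_code {p : α → Prop} (hp : CEPred p) :
    ∃ c : Code, ∀ a, (c.eval (encode a)).Dom ↔ p a := by
  obtain ⟨c, hc⟩ := Code.exists_code.1 hp
  exact ⟨c, fun a => by simp [hc, encodek, Part.assert]⟩

theorem CEPred.exists_stages {p : α → Prop} (hp : CEPred p) :
    ∃ r : α → ℕ → Prop, PrimrecRel r ∧ (∀ a, Monotone (r a)) ∧ ∀ a, p a ↔ ∃ t, r a t := by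
  obtain ⟨c, hc⟩ := hp.exists_code
  refine ⟨fun a t => ∃ v, v ∈ c.evaln t (encode a), ?_, fun a t t' h => ?_, fun a => ?_⟩
  · have hrun : Primrec fun x : α × ℕ => (c.evaln x.2 (encode x.1)).isSome :=
      Primrec.option_isSome.comp (Code.primrec_evaln.comp
        ((Primrec.snd.pair (Primrec.const c)).pair (Primrec.encode.comp Primrec.fst)))
    exact (Primrec.eq.comp hrun (Primrec.const true)).of_eq fun x => Option.isSome_iff_exists
  · exact fun ⟨v, hv⟩ => ⟨v, Code.evaln_mono h hv⟩
  · rw [← hc, Part.dom_iff_mem, exists_comm]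
    simp only [Code.evaln_complete]

theorem cePred_exists {r : α → ℕ → Prop} (hr : PrimrecRel r) : CEPred fun a => ∃ t, r a t := by
  have hsearch : Partrec fun a => Nat.rfind fun t => Part.some (decide (r a t)) :=
    Partrec.rfind (p := fun a t => Part.some (decide (r a t))) hr.decide.to_comp.partrec₂
  exact hsearch.dom_re.of_eq fun a => Nat.rfind_dom'.trans (by simp)

theorem CEPred.comp {p : β → Prop} {f : α → β} (hp : CEPred p) (hf : Primrec f) :
    CEPred fun a => p (f a) :=
  Partrec.comp hp hf.to_comp

theorem CEPred.or {p q : α → Prop} (hp : CEPred p) (hq : CEPred q) :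
    CEPred fun a => p a ∨ q a := by
  obtain ⟨r, hr, -, hpr⟩ := hp.exists_stages
  obtain ⟨r', hr', -, hqr⟩ := hq.exists_stages
  refine REPred.of_eq (cePred_exists (r := fun a t => r a t ∨ r' a t)
    (PrimrecPred.or hr hr')) fun a => ?_
  rw [exists_or, hpr, hqr]

theorem CEPred.forall_mem_list {p : β → Prop} {L : α → List β} (hp : CEPred p) (hL : Primrec L) :
    CEPred fun a => ∀ b ∈ L a, p b := by
  obtain ⟨r, hr, hmono, hpr⟩ := hp.exists_stages
  refine REPred.of_eq (cePred_exists (r := fun a t => ∀ b ∈ L a, r b t)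
    (hr.forall_mem_list.comp (hL.comp .fst) .snd)) fun a => ?_
  constructor
  · rintro ⟨t, ht⟩ b hb
    exact (hpr b).2 ⟨t, ht b hb⟩
  · intro h
    choose! t ht using fun b hb => (hpr b).1 (h b hb)
    refine ⟨((L a).map t).sum, fun b hb => hmono b ?_ (ht b hb)⟩
    exact List.single_le_sum (by simp) _ (List.mem_map_of_mem hb)

theorem CEPred.decidableIn {O : ℕ →. ℕ} {p : α → Prop} (hp : CEPred p)
    (hO : TuringLE (oracleOfSet haltingSet) O) : DecidableIn O p := by
  obtain ⟨c, hc⟩ := (hp.comp (Primrec.fst : Primrec (Prod.fst : α × ℕ → α))).exists_code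
  have hindex : Primrec fun a : α => encode (c.curry (encode a)) :=
    Primrec.encode.comp (Code.primrec₂_curry.comp (Primrec.const c) Primrec.encode)
  have hhalt : DecidableIn O (· ∈ haltingSet) :=
    computableIn_iff_turingLE.2 (RecIn.of_eq hO fun n => by
      by_cases h : n ∈ haltingSet <;> simp [oracleOf, oracleOfSet, h])
  refine (hhalt.comp (.of_primrec hindex)).of_eq fun a => decide_eq_decide.2 ?_
  simpa [haltingSet, phi] using hc (a, encode (c.curry (encode a)))

theorem CEPred.computableIn_of_graph {O : ℕ →. ℕ} [Inhabited γ] {f : α → γ} {g : α → β}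
    {p : β × γ → Prop} (hp : CEPred p) (hg : ComputableIn O g)
    (h : ∀ a c, p (g a, c) ↔ c = f a) : ComputableIn O f := by
  obtain ⟨r, hr, -, hpr⟩ := hp.exists_stages
  have hq : DecidableIn O fun x : α × γ × ℕ => r (g x.1, x.2.1) x.2.2 :=
    (DecidableIn.of_primrecPred hr).comp
      (((hg.comp (.of_primrec .fst)).pair (.of_primrec (Primrec.fst.comp .snd))).pair
        (.of_primrec (Primrec.snd.comp .snd)))
  obtain ⟨w, hw, hspec⟩ := hq.exists_choice fun a => by
    obtain ⟨t, ht⟩ := (hpr _).1 ((h a (f a)).2 rfl)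
    exact ⟨(f a, t), ht⟩
  exact ((ComputableIn.of_primrec Primrec.fst).comp hw).of_eq fun a =>
    (h a _).1 ((hpr _).2 ⟨_, hspec a⟩)

end ComputablyEnumerable

section CantorSpace
open MeasureTheory Set

@[simp]
theorem length_pre (A : Seq) (n : ℕ) : (pre A n).length = n := by simp [pre]

theorem pre_succ (A : Seq) (n : ℕ) : pre A (n + 1) = pre A n ++ [A n] := by
  rw [pre, List.ofFn_succ_last]
  simp [pre]

theorem take_pre (A : Seq) {m n : ℕ} (h : m ≤ n) : (pre A n).take m = pre A m :=
  List.ext_getElem (by simpa) fun i _ _ => by simp [pre]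

theorem mem_cyl {A : Seq} {σ : Str} : A ∈ cyl σ ↔ pre A σ.length = σ := Iff.rfl

theorem prefix_pre_iff {A : Seq} {σ : Str} {n : ℕ} (hn : σ.length ≤ n) :
    σ <+: pre A n ↔ A ∈ cyl σ := by
  rw [List.prefix_iff_eq_take, take_pre A hn, mem_cyl, eq_comm]

theorem mem_cyl_pre (A : Seq) (n : ℕ) : A ∈ cyl (pre A n) := by simp [mem_cyl]

theorem cyl_subset_cyl {σ ρ : Str} (h : σ <+: ρ) : cyl ρ ⊆ cyl σ := fun A hA =>
  (prefix_pre_iff h.length_le).1 (by rwa [mem_cyl.1 hA])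

theorem computableIn_pre (A : Seq) : ComputableIn (oracleOf A) (pre A) := by
  have hg : ComputableIn (oracleOf A) fun x : ℕ × Str => x.2 ++ [A x.1] :=
    (ComputableIn.of_primrec (f := fun y : Str × Bool => y.1 ++ [y.2]) Primrec.list_concat).comp
      ((ComputableIn.of_primrec .snd).pair
        ((computableIn_oracleOf A).comp (.of_primrec .fst)))
  refine (ComputableIn.nat_rec [] hg).of_eq fun n => ?_
  induction n with
  | zero => simp [pre]
  | succ k ih => simp only [pre_succ, ← ih]

theorem measurableSet_setOf_pre (n : ℕ) (p : Str → Prop) : MeasurableSet {A | p (pre A n)} :=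
  (measurable_pi_lambda (fun (A : Seq) (i : Fin n) => A i) fun _ => measurable_pi_apply _)
    (MeasurableSet.of_discrete (s := {f | p (List.ofFn f)}))

theorem measurableSet_cyl (σ : Str) : MeasurableSet (cyl σ) :=
  measurableSet_setOf_pre σ.length (· = σ)

/-- The open class `[S]` of all sequences extending some element of `S`. -/
def openClass (S : Set Str) : Set Seq := ⋃ σ ∈ S, cyl σ

theorem mem_openClass {S : Set Str} {A : Seq} : A ∈ openClass S ↔ ∃ σ ∈ S, A ∈ cyl σ := by
  simp [openClass]

theorem measurableSet_openClass (S : Set Str) : MeasurableSet (openClass S) :=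
  .biUnion S.to_countable fun σ _ => measurableSet_cyl σ

/-- The list of all binary strings of length `n`. -/
def stringsOfLength : ℕ → List Str
  | 0 => [[]]
  | n + 1 => (stringsOfLength n).map (List.cons false) ++ (stringsOfLength n).map (List.cons true)

theorem mem_stringsOfLength {n : ℕ} {σ : Str} : σ ∈ stringsOfLength n ↔ σ.length = n := by
  induction n generalizing σ with
  | zero => simp [stringsOfLength]
  | succ n ih =>
    rcases σ with - | ⟨b, σ⟩
    · simp [stringsOfLength]
    · cases b <;> simp [stringsOfLength, ih]

theorem nodup_stringsOfLength (n : ℕ) : (stringsOfLength n).Nodup := by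
  induction n with
  | zero => simp [stringsOfLength]
  | succ n ih =>
    refine List.Nodup.append (ih.map List.cons_injective) (ih.map List.cons_injective) ?_
    simp [List.Disjoint]

theorem length_stringsOfLength (n : ℕ) : (stringsOfLength n).length = 2 ^ n := by
  induction n with
  | zero => simp [stringsOfLength]
  | succ n ih => simp [stringsOfLength, ih, pow_succ, mul_two]

theorem primrec_stringsOfLength : Primrec stringsOfLength := by
  refine (Primrec.nat_rec₁ (f := fun _ L => L.map (List.cons false) ++ L.map (List.cons true))
    [[]] ?_).of_eq fun n => ?_
  · exact Primrec.list_append.comp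
      (Primrec.list_map Primrec.snd (Primrec.list_cons.comp₂ (Primrec₂.const _) Primrec₂.right))
      (Primrec.list_map Primrec.snd (Primrec.list_cons.comp₂ (Primrec₂.const _) Primrec₂.right))
  · induction n with
    | zero => rfl
    | succ n ih => simp only [stringsOfLength, ih]

theorem primrec_two_pow : Primrec fun n : ℕ => 2 ^ n :=
  (Primrec.list_length.comp primrec_stringsOfLength).of_eq length_stringsOfLength

variable {μ : Measure Seq}

theorem FairCoin.isProbabilityMeasure (hμ : FairCoin μ) : IsProbabilityMeasure μ := by
  have huniv : cyl [] = univ := by simp [cyl, pre]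
  exact ⟨by simpa [huniv] using hμ []⟩

theorem FairCoin.measure_setOf_pre (hμ : FairCoin μ) (n : ℕ) (p : Str → Prop) :
    μ {A | p (pre A n)} = ((stringsOfLength n).filter (p ·)).length * (2⁻¹ : ℝ≥0∞) ^ n := by
  let F : Finset Str := ((stringsOfLength n).filter (p ·)).toFinset
  have hF {ρ : Str} : ρ ∈ F ↔ ρ.length = n ∧ p ρ := by simp [F, mem_stringsOfLength]
  have hunion : {A | p (pre A n)} = ⋃ ρ ∈ F, cyl ρ := by
    ext A
    simp only [mem_ofPred_eq, mem_iUnion, exists_prop, hF]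
    constructor
    · exact fun h => ⟨pre A n, ⟨length_pre A n, h⟩, mem_cyl_pre A n⟩
    · rintro ⟨ρ, ⟨rfl, hρ⟩, hA⟩
      rwa [mem_cyl.1 hA]
  have hdisj : (F : Set Str).PairwiseDisjoint cyl := fun ρ hρ ρ' hρ' hne =>
    disjoint_left.2 fun A hA hA' => hne <| by
      rw [← mem_cyl.1 hA, ← mem_cyl.1 hA', (hF.1 hρ).1, (hF.1 hρ').1]
  rw [hunion, measure_biUnion_finset hdisj fun ρ _ => measurableSet_cyl ρ,
    Finset.sum_congr rfl fun ρ hρ => by rw [hμ, (hF.1 hρ).1], Finset.sum_const, nsmul_eq_mul,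
    List.toFinset_card_of_nodup ((nodup_stringsOfLength n).filter _)]

theorem FairCoin.measure_setOf_pre_lt_iff (hμ : FairCoin μ) (n k : ℕ) (p : Str → Prop) :
    μ {A | p (pre A n)} < (2⁻¹ : ℝ≥0∞) ^ k ↔
      ((stringsOfLength n).filter (p ·)).length * 2 ^ k < 2 ^ n := by
  rw [hμ.measure_setOf_pre, ← ENNReal.inv_pow, ← ENNReal.inv_pow, ← div_eq_mul_inv,
    ENNReal.div_lt_iff (by simp) (by simp), mul_comm _⁻¹, ← div_eq_mul_inv,
    ENNReal.lt_div_iff_mul_lt (by simp) (by simp)]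
  norm_cast

variable {α : Type*} [Primcodable α]

theorem FairCoin.primrecRel_measure_setOf_pre_lt (hμ : FairCoin μ) {D : α → Str → Prop}
    (hD : PrimrecRel D) :
    PrimrecRel fun (x : α × ℕ) k => μ {A | D x.1 (pre A x.2)} < (2⁻¹ : ℝ≥0∞) ^ k := by
  have hcount : Primrec fun x : α × ℕ => ((stringsOfLength x.2).filter (D x.1 ·)).length :=
    Primrec.list_length.comp
      (hD.swap.listFilter.comp (primrec_stringsOfLength.comp Primrec.snd) Primrec.fst)
  refine PrimrecRel.of_eq (r := fun (x : α × ℕ) k =>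
    ((stringsOfLength x.2).filter (D x.1 ·)).length * 2 ^ k < 2 ^ x.2) ?_
    fun x k => (hμ.measure_setOf_pre_lt_iff x.2 k (D x.1)).symm
  exact Primrec.nat_lt.comp
    (Primrec.nat_mul.comp (hcount.comp Primrec.fst) (primrec_two_pow.comp Primrec.snd))
    (primrec_two_pow.comp (Primrec.snd.comp Primrec.fst))

theorem primrecRel_exists_prefix {r : Str → α → Prop} (hr : PrimrecRel r) :
    PrimrecRel fun ρ a => ∃ σ, σ <+: ρ ∧ r σ a := by
  have hprefixes : Primrec fun ρ : Str => (List.range (ρ.length + 1)).map (ρ.take ·) :=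
    Primrec.list_map (Primrec.list_range.comp (Primrec.succ.comp Primrec.list_length))
      (Primrec.list_take.comp Primrec.snd Primrec.fst).to₂
  refine (hr.exists_mem_list.comp (hprefixes.comp Primrec.fst) Primrec.snd).of_eq fun x => ?_
  refine exists_congr fun σ => and_congr_left fun _ => ?_
  simp only [List.mem_map, List.mem_range, Nat.lt_succ_iff]
  constructor
  · rintro ⟨n, -, rfl⟩
    exact List.take_prefix n x.1
  · exact fun h => ⟨σ.length, h.length_le, (List.prefix_iff_eq_take.1 h).symm⟩

theorem CEPred.exists_openClass_eq_iUnion {W : α × Str → Prop} (hW : CEPred W) :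
    ∃ D : α → Str → Prop, PrimrecRel D ∧ (∀ a, Monotone fun n => {A | D a (pre A n)}) ∧
      ∀ a, openClass {σ | W (a, σ)} = ⋃ n, {A | D a (pre A n)} := by
  obtain ⟨r, hr, hmono, hWr⟩ := hW.exists_stages
  refine ⟨fun a ρ => ∃ σ, σ <+: ρ ∧ r (a, σ) ρ.length, ?_, fun a m n hmn A hA => ?_, fun a => ?_⟩
  · have hr' : PrimrecRel fun (σ : Str) (y : α × ℕ) => r (y.1, σ) y.2 :=
      hr.comp ((Primrec.fst.comp Primrec.snd).pair Primrec.fst) (Primrec.snd.comp Primrec.snd)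
    exact (primrecRel_exists_prefix hr').comp Primrec.snd
      (Primrec.fst.pair (Primrec.list_length.comp Primrec.snd))
  · obtain ⟨σ, hσ, hrσ⟩ := hA
    rw [length_pre] at hrσ
    refine ⟨σ, hσ.trans ?_, hmono _ (by simpa) hrσ⟩
    exact (prefix_pre_iff (by simpa)).2 (mem_cyl_pre A m)
  · ext A
    simp only [mem_openClass, mem_iUnion, mem_ofPred_eq, length_pre, hWr]
    constructor
    · rintro ⟨σ, ⟨t, ht⟩, hA⟩
      exact ⟨max σ.length t, σ, (prefix_pre_iff (le_max_left ..)).2 hA,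
        hmono _ (le_max_right ..) ht⟩
    · rintro ⟨n, σ, hσ, hrσ⟩
      exact ⟨σ, ⟨n, hrσ⟩, cyl_subset_cyl hσ (mem_cyl_pre A n)⟩

theorem FairCoin.cePred_measure_compl_openClass_lt (hμ : FairCoin μ) {W : α × Str → Prop}
    (hW : CEPred W) :
    CEPred fun x : α × ℕ => μ (openClass {σ | W (x.1, σ)})ᶜ < (2⁻¹ : ℝ≥0∞) ^ x.2 := by
  have := hμ.isProbabilityMeasure
  obtain ⟨D, hD, hmono, hWD⟩ := hW.exists_openClass_eq_iUnion
  have hstage : PrimrecRel fun (x : α × ℕ) n =>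
      μ {A | ¬D x.1 (pre A n)} < (2⁻¹ : ℝ≥0∞) ^ x.2 :=
    (hμ.primrecRel_measure_setOf_pre_lt (D := fun a ρ => ¬D a ρ) hD.not).comp
      ((Primrec.fst.comp Primrec.fst).pair Primrec.snd) (Primrec.snd.comp Primrec.fst)
  refine REPred.of_eq (cePred_exists hstage) fun x => ?_
  have hcompl : (openClass {σ | W (x.1, σ)})ᶜ = ⋂ n, {A | ¬D x.1 (pre A n)} := by
    rw [hWD, compl_iUnion]
    rfl
  rw [hcompl]
  constructor
  · exact fun ⟨n, hn⟩ => (measure_mono (iInter_subset _ n)).trans_lt hn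
  · have hlim := tendsto_measure_iInter_atTop (μ := μ)
      (fun n => (measurableSet_setOf_pre n (¬D x.1 ·)).nullMeasurableSet)
      (fun m n h => compl_subset_compl.2 (hmono x.1 h)) ⟨0, measure_ne_top _ _⟩
    exact fun h => (hlim.eventually (gt_mem_nhds h)).exists

end CantorSpace

section UniversalTest
open MeasureTheory Set Encodable
open Nat.Partrec (Code)

variable {α : Type*} [Primcodable α]

theorem exists_universal_cePred :
    ∃ W : ℕ × α → Prop, CEPred W ∧ ∀ V : α → Prop, CEPred V → ∃ e, ∀ a, W (e, a) ↔ V a := by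
  refine ⟨fun x => ((Denumerable.ofNat Code x.1).eval (encode x.2)).Dom, ?_, fun V hV => ?_⟩
  · exact Partrec.dom_re (Code.eval_part.comp ((Computable.ofNat Code).comp Computable.fst)
      (Computable.encode.comp Computable.snd))
  · obtain ⟨c, hc⟩ := hV.exists_code
    exact ⟨encode c, fun a => by simpa using hc a⟩

theorem measure_biUnion_lt_le {Ω ι : Type*} [MeasurableSpace Ω] [LinearOrder ι] [Countable ι]
    (μ : Measure Ω) {s : ι → Set Ω} (hs : Monotone s) (ε : ℝ≥0∞) :
    μ (⋃ i ∈ {i | μ (s i) < ε}, s i) ≤ ε := by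
  rw [measure_biUnion_eq_iSup (to_countable _)]
  · exact iSup₂_le fun i hi => le_of_lt hi
  · intro i hi j hj
    rcases le_total i j with h | h
    · exact ⟨j, hj, hs h, subset_rfl⟩
    · exact ⟨i, hi, subset_rfl, hs h⟩

variable {μ : Measure Seq}

theorem strictAnti_inv_two_pow : StrictAnti fun n : ℕ => (2⁻¹ : ℝ≥0∞) ^ n :=
  strictAnti_nat_of_succ_lt fun n => by
    rw [pow_succ, ← div_eq_mul_inv]
    exact ENNReal.half_lt_self (by simp) (by simp)

theorem tsum_inv_two_pow_add_two : ∑' e : ℕ, (2⁻¹ : ℝ≥0∞) ^ (e + 2) = 2⁻¹ := by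
  simp only [pow_succ _ (_ + 1), ENNReal.tsum_mul_right, ENNReal.tsum_geometric_add_one,
    ENNReal.one_sub_inv_two, inv_inv]
  simp [ENNReal.inv_mul_cancel]

theorem FairCoin.exists_openClass_of_small (hμ : FairCoin μ) {D : ℕ → Str → Prop}
    (hD : PrimrecRel D) (hmono : ∀ e, Monotone fun n => {A | D e (pre A n)}) :
    ∃ S : Set Str, CEPred (· ∈ S) ∧ μ (openClass S) < 1 ∧
      ∀ e, (∀ n, μ {A | D e (pre A n)} < (2⁻¹ : ℝ≥0∞) ^ (e + 2)) →
        ⋃ n, {A | D e (pre A n)} ⊆ openClass S := by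
  let S : Set Str := {ρ | ∃ e, D e ρ ∧ μ {A | D e (pre A ρ.length)} < (2⁻¹ : ℝ≥0∞) ^ (e + 2)}
  have hce : CEPred (· ∈ S) := by
    refine cePred_exists (r := fun ρ e =>
      D e ρ ∧ μ {A | D e (pre A ρ.length)} < (2⁻¹ : ℝ≥0∞) ^ (e + 2)) (hD.swap.and ?_)
    exact (hμ.primrecRel_measure_setOf_pre_lt hD).comp
      (Primrec.snd.pair (Primrec.list_length.comp Primrec.fst))
      (Primrec.nat_add.comp Primrec.snd (Primrec.const 2))
  have hS : openClass S = ⋃ e, ⋃ n ∈ {n | μ {A | D e (pre A n)} < (2⁻¹ : ℝ≥0∞) ^ (e + 2)},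
      {A | D e (pre A n)} := by
    ext A
    simp only [S, mem_openClass, mem_iUnion, mem_ofPred_eq, exists_prop]
    constructor
    · rintro ⟨ρ, ⟨e, hρ, hlt⟩, hA⟩
      exact ⟨e, ρ.length, hlt, by rwa [mem_cyl.1 hA]⟩
    · rintro ⟨e, n, hlt, hA⟩
      exact ⟨pre A n, ⟨e, hA, by rwa [length_pre]⟩, mem_cyl_pre A n⟩
  refine ⟨S, hce, ?_, fun e he => ?_⟩
  · calc μ (openClass S)
      _ ≤ ∑' e : ℕ, (2⁻¹ : ℝ≥0∞) ^ (e + 2) := by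
        rw [hS]
        exact (measure_iUnion_le _).trans
          (ENNReal.tsum_le_tsum fun e => measure_biUnion_lt_le μ (hmono e) _)
      _ = 2⁻¹ := tsum_inv_two_pow_add_two
      _ < 1 := ENNReal.inv_lt_one.2 ENNReal.one_lt_two
  · rw [hS]
    exact iUnion_subset fun n => (subset_biUnion_of_mem (u := fun n => {A | D e (pre A n)})
      (he n)).trans (subset_iUnion_of_subset e subset_rfl)

theorem FairCoin.exists_universal_openClass (hμ : FairCoin μ) :
    ∃ S : Set Str, CEPred (· ∈ S) ∧ μ (openClass S) < 1 ∧ ∀ R ∉ openClass S, MLRandom μ R := by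
  obtain ⟨W, hW, huniv⟩ := exists_universal_cePred (α := ℕ × Str)
  -- Diagonalization: component `e` of the `e`-th uniformly c.e. sequence suffices, because a test
  -- shifted by `3` is enumerated and has measure below the threshold at its own index.
  have hdiag : CEPred fun x : ℕ × Str => W (x.1, x.1, x.2) :=
    hW.comp (Primrec.fst.pair (Primrec.fst.pair Primrec.snd))
  obtain ⟨D, hD, hmono, hWD⟩ := hdiag.exists_openClass_eq_iUnion
  obtain ⟨S, hS, hlt, hsub⟩ := hμ.exists_openClass_of_small hD hmono
  refine ⟨S, hS, hlt, fun R hR U ⟨V, hV, hUV, hU⟩ hRU => hR ?_⟩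
  obtain ⟨e, he⟩ := huniv (fun x => (x.1 + 3, x.2) ∈ V)
    (hV.comp ((Primrec.nat_add.comp Primrec.fst (Primrec.const 3)).pair Primrec.snd))
  have hUD : U (e + 3) = ⋃ n, {A | D e (pre A n)} := by
    rw [hUV, ← hWD]
    simp only [he]
    rfl
  refine hsub e (fun n => ?_) (hUD ▸ mem_iInter.1 hRU (e + 3))
  calc μ {A | D e (pre A n)}
    _ ≤ μ (U (e + 3)) := measure_mono (hUD ▸ subset_iUnion (fun n => {A | D e (pre A n)}) n)
    _ ≤ (2⁻¹ : ℝ≥0∞) ^ (e + 3) := hU (e + 3)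
    _ < (2⁻¹ : ℝ≥0∞) ^ (e + 2) := strictAnti_inv_two_pow (Nat.lt_succ_self _)

end UniversalTest

section KuceraCoding
open MeasureTheory Set Encodable

variable {μ : Measure Seq} {G : Set Seq} {S : Set Str}

/-- The string `σ` is *thick* at level `m` for the class `G` if at least the fraction `2^{-m}` of
the cylinder `[σ]` lies outside `G`. -/
def Thick (μ : Measure Seq) (G : Set Seq) (m : ℕ) (σ : Str) : Prop :=
  (2⁻¹ : ℝ≥0∞) ^ (σ.length + m) ≤ μ (cyl σ \ G)

theorem Thick.not_cyl_subset {m : ℕ} {σ : Str} (h : Thick μ G m σ) : ¬cyl σ ⊆ G := fun hsub => by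
  rw [Thick, sdiff_eq_empty.2 hsub, measure_empty, nonpos_iff_eq_zero] at h
  simp at h

theorem FairCoin.exists_thick_nil (hμ : FairCoin μ) (hG : MeasurableSet G) (hlt : μ G < 1) :
    ∃ c, Thick μ G c [] := by
  have := hμ.isProbabilityMeasure
  have hpos : μ Gᶜ ≠ 0 := by
    rw [prob_compl_eq_one_sub hG]
    exact (tsub_pos_of_lt hlt).ne'
  obtain ⟨c, hc⟩ := ENNReal.exists_inv_two_pow_lt hpos
  have huniv : cyl [] = univ := by simp [cyl, pre]
  exact ⟨c, by simpa [Thick, huniv, ← compl_eq_univ_sdiff] using hc.le⟩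

theorem cyl_diff_openClass (τ : Str) (S : Set Str) :
    cyl τ \ openClass S = (openClass {σ | σ ∈ S ∨ σ.length = τ.length ∧ σ ≠ τ})ᶜ := by
  ext A
  simp only [mem_sdiff, mem_compl_iff, mem_openClass, mem_ofPred_eq, not_exists, not_and]
  constructor
  · rintro ⟨hA, hS⟩ σ (hσ | ⟨hlen, hne⟩) hAσ
    · exact hS σ hσ hAσ
    · exact hne (by rw [← mem_cyl.1 hAσ, hlen, mem_cyl.1 hA])
  · refine fun h => ⟨?_, fun σ hσ => h σ (.inl hσ)⟩
    by_contra hA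
    exact h _ (.inr ⟨length_pre A _, hA⟩) (mem_cyl_pre A τ.length)

theorem FairCoin.cePred_not_thick (hμ : FairCoin μ) (hS : CEPred (· ∈ S)) :
    CEPred fun x : ℕ × Str => ¬Thick μ (openClass S) x.1 x.2 := by
  have hlen : PrimrecPred fun x : Str × Str => x.2.length = x.1.length ∧ x.2 ≠ x.1 :=
    (Primrec.eq.comp (Primrec.list_length.comp Primrec.snd)
      (Primrec.list_length.comp Primrec.fst)).and (Primrec.eq.comp Primrec.snd Primrec.fst).not
  have hW : CEPred fun x : Str × Str => x.2 ∈ S ∨ x.2.length = x.1.length ∧ x.2 ≠ x.1 :=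
    (hS.comp Primrec.snd).or hlen.computablePred.to_re
  refine REPred.of_eq ((hμ.cePred_measure_compl_openClass_lt hW).comp
    (Primrec.snd.pair (Primrec.nat_add.comp (Primrec.list_length.comp Primrec.snd) Primrec.fst)))
    fun x => ?_
  rw [Thick, not_le, cyl_diff_openClass]

theorem FairCoin.decidableIn_thick (hμ : FairCoin μ) (hS : CEPred (· ∈ S)) {O : ℕ →. ℕ}
    (hO : TuringLE (oracleOfSet haltingSet) O) :
    DecidableIn O fun x : ℕ × Str => Thick μ (openClass S) x.1 x.2 :=
  ((hμ.cePred_not_thick hS).decidableIn hO).not.of_eq fun _ => decide_eq_decide.2 not_not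

theorem cyl_subset_biUnion_append (σ : Str) (ℓ : ℕ) :
    cyl σ ⊆ ⋃ τ ∈ (stringsOfLength ℓ).toFinset, cyl (σ ++ τ) := fun A hA => by
  obtain ⟨τ, hτ⟩ := (prefix_pre_iff (Nat.le_add_right σ.length ℓ)).2 hA
  have hlen : τ.length = ℓ := by simpa using congrArg List.length hτ
  simp only [mem_iUnion, List.mem_toFinset, mem_stringsOfLength]
  exact ⟨τ, hlen, hτ ▸ mem_cyl_pre A _⟩

theorem FairCoin.measure_cyl_diff_le (hμ : FairCoin μ) {k ℓ : ℕ} {σ τ₀ : Str}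
    (hτ₀ : ∀ τ, τ.length = ℓ → τ ≠ τ₀ → ¬Thick μ G k (σ ++ τ)) :
    μ (cyl σ \ G) ≤ 2⁻¹ ^ (σ.length + ℓ) + 2⁻¹ ^ (σ.length + k) := by
  have hbound : ∀ τ ∈ (stringsOfLength ℓ).toFinset, μ (cyl (σ ++ τ) \ G) ≤
      (if τ = τ₀ then (2⁻¹ : ℝ≥0∞) ^ (σ.length + ℓ) else 0) + 2⁻¹ ^ (σ.length + ℓ + k) := by
    intro τ hτ
    rw [List.mem_toFinset, mem_stringsOfLength] at hτ
    split_ifs with h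
    · refine (measure_mono sdiff_subset).trans (le_add_right ?_)
      rw [hμ, List.length_append, hτ]
    · simpa [Thick, hτ] using (not_le.1 (hτ₀ τ hτ h)).le
  calc μ (cyl σ \ G)
    _ ≤ ∑ τ ∈ (stringsOfLength ℓ).toFinset, μ (cyl (σ ++ τ) \ G) := by
      refine (measure_mono ?_).trans (measure_biUnion_finset_le _ _)
      simpa only [iUnion_sdiff] using sdiff_subset_sdiff_left (cyl_subset_biUnion_append σ ℓ)
    _ ≤ 2⁻¹ ^ (σ.length + ℓ) + 2 ^ ℓ * 2⁻¹ ^ (σ.length + ℓ + k) := by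
      refine (Finset.sum_le_sum hbound).trans ?_
      rw [Finset.sum_add_distrib, Finset.sum_ite_eq', Finset.sum_const, nsmul_eq_mul,
        List.toFinset_card_of_nodup (nodup_stringsOfLength ℓ), length_stringsOfLength]
      push_cast
      gcongr
      split_ifs <;> simp
    _ = 2⁻¹ ^ (σ.length + ℓ) + 2⁻¹ ^ (σ.length + k) := by
      rw [add_right_comm, pow_add _ (_ + k), mul_left_comm, ← mul_pow,
        ENNReal.mul_inv_cancel two_ne_zero ENNReal.ofNat_ne_top, one_pow, mul_one]

theorem FairCoin.exists_thick_ne (hμ : FairCoin μ) {m ℓ : ℕ} {σ : Str} (hσ : Thick μ G m σ)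
    (hℓ : m + 2 ≤ ℓ) (ρ₀ : Str) :
    ∃ ρ ≠ ρ₀, ρ.length = σ.length + ℓ ∧ σ <+: ρ ∧ Thick μ G (m + 1) ρ := by
  by_contra! hnone
  have hthin : ∀ τ, τ.length = ℓ → τ ≠ ρ₀.drop σ.length → ¬Thick μ G (m + 1) (σ ++ τ) :=
    fun τ hτ hne => hnone _ (fun h => hne (by simp [← h])) (by simp [hτ]) (List.prefix_append σ τ)
  refine hσ.not_gt ?_
  calc μ (cyl σ \ G)
    _ ≤ 2⁻¹ ^ (σ.length + ℓ) + 2⁻¹ ^ (σ.length + (m + 1)) := hμ.measure_cyl_diff_le hthin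
    _ < 2⁻¹ ^ (σ.length + m) * 2⁻¹ + 2⁻¹ ^ (σ.length + m) * 2⁻¹ := by
      refine ENNReal.add_lt_add_of_lt_of_le (by simp) ?_ (by rw [← add_assoc, pow_succ])
      rw [← pow_succ]
      exact strictAnti_inv_two_pow (by omega)
    _ = 2⁻¹ ^ (σ.length + m) := by rw [← mul_add, ENNReal.inv_two_add_inv_two, mul_one]

/-- The string `ρ` is *extremal* for the bit `b` if, in the order of codes, it is the first
(`b = false`) or the last (`b = true`) among the strings of its length which are thick at level `m`
and share its first `n` bits. Thickness of `ρ` itself is not part of the definition, which keeps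
the notion c.e. -/
def Extremal (μ : Measure Seq) (G : Set Seq) (n m : ℕ) (ρ : Str) (b : Bool) : Prop :=
  ∀ ρ', ρ'.length = ρ.length → ρ'.take n = ρ.take n → ρ' ≠ ρ → Thick μ G m ρ' →
    decide (encode ρ' < encode ρ) = b

theorem FairCoin.cePred_extremal (hμ : FairCoin μ) (hS : CEPred (· ∈ S)) :
    CEPred fun x : ((ℕ × ℕ) × Str) × Bool =>
      Extremal μ (openClass S) x.1.1.1 x.1.1.2 x.1.2 x.2 := by
  have hn : Primrec fun x : ((ℕ × ℕ) × Str) × Bool => x.1.1.1 :=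
    Primrec.fst.comp (Primrec.fst.comp Primrec.fst)
  have hm : Primrec fun x : ((ℕ × ℕ) × Str) × Bool => x.1.1.2 :=
    Primrec.snd.comp (Primrec.fst.comp Primrec.fst)
  have hρ : Primrec fun x : ((ℕ × ℕ) × Str) × Bool => x.1.2 := Primrec.snd.comp Primrec.fst
  let Violates (ρ' : Str) (x : ((ℕ × ℕ) × Str) × Bool) : Prop :=
    (ρ'.take x.1.1.1 = x.1.2.take x.1.1.1 ∧ ρ' ≠ x.1.2) ∧
      decide (encode ρ' < encode x.1.2) ≠ x.2
  have hviol : PrimrecRel Violates :=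
    ((Primrec.eq.comp (Primrec.list_take.comp (hn.comp Primrec.snd) Primrec.fst)
      (Primrec.list_take.comp (hn.comp Primrec.snd) (hρ.comp Primrec.snd))).and
      (Primrec.eq.comp Primrec.fst (hρ.comp Primrec.snd)).not).and
      (Primrec.eq.comp (Primrec.nat_lt.comp (Primrec.encode.comp Primrec.fst)
        (Primrec.encode.comp (hρ.comp Primrec.snd))).decide (Primrec.snd.comp Primrec.snd)).not
  have hlist : Primrec fun x : ((ℕ × ℕ) × Str) × Bool =>
      ((stringsOfLength x.1.2.length).filter (Violates · x)).map fun ρ' => (x.1.1.2, ρ') :=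
    Primrec.list_map (hviol.listFilter.comp
      (primrec_stringsOfLength.comp (Primrec.list_length.comp hρ)) Primrec.id)
      ((hm.comp Primrec.fst).pair Primrec.snd).to₂
  refine REPred.of_eq ((hμ.cePred_not_thick hS).forall_mem_list hlist) fun x => ?_
  simp only [List.forall_mem_map, List.mem_filter, mem_stringsOfLength, Extremal, Violates,
    decide_eq_true_eq]
  refine forall_congr' fun ρ' => ⟨fun h hlen htake hne hthick => ?_, fun h hρ' hthick => ?_⟩
  · exact by_contra fun hb => h ⟨hlen, ⟨htake, hne⟩, hb⟩ hthick
  · exact hρ'.2.2 (h hρ'.1 hρ'.2.1.1 hρ'.2.1.2 hthick)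

theorem exists_extremal {m ℓ : ℕ} {σ : Str} (b : Bool)
    (hne : ∃ ρ, ρ.length = ℓ ∧ σ <+: ρ ∧ Thick μ G m ρ) :
    ∃ ρ, ρ.length = ℓ ∧ σ <+: ρ ∧ Thick μ G m ρ ∧ Extremal μ G σ.length m ρ b := by
  let T := {ρ | ρ.length = ℓ ∧ σ <+: ρ ∧ Thick μ G m ρ}
  have hfin : T.Finite := (List.finite_length_eq Bool ℓ).subset fun ρ hρ => hρ.1
  have hT {ρ ρ' : Str} (hρ : ρ ∈ T) (hlen : ρ'.length = ρ.length)
      (htake : ρ'.take σ.length = ρ.take σ.length) (hthick : Thick μ G m ρ') : ρ' ∈ T := by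
    refine ⟨hlen.trans hρ.1, ?_, hthick⟩
    rw [List.prefix_iff_eq_take, htake]
    exact List.prefix_iff_eq_take.1 hρ.2.1
  cases b
  · obtain ⟨ρ, hρ, hmin⟩ := exists_min_image T encode hfin hne
    refine ⟨ρ, hρ.1, hρ.2.1, hρ.2.2, fun ρ' hlen htake _ hthick => ?_⟩
    simpa using hmin ρ' (hT hρ hlen htake hthick)
  · obtain ⟨ρ, hρ, hmax⟩ := exists_max_image T encode hfin hne
    refine ⟨ρ, hρ.1, hρ.2.1, hρ.2.2, fun ρ' hlen htake hne hthick => ?_⟩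
    simpa using (hmax ρ' (hT hρ hlen htake hthick)).lt_of_ne (encode_injective.ne hne)

theorem FairCoin.extremal_iff_eq (hμ : FairCoin μ) {m ℓ : ℕ} {σ ρ : Str} {b : Bool}
    (hσ : Thick μ G m σ) (hℓ : m + 2 ≤ ℓ) (hlen : ρ.length = σ.length + ℓ) (hpre : σ <+: ρ)
    (hρ : Extremal μ G σ.length (m + 1) ρ b) (c : Bool) :
    Extremal μ G σ.length (m + 1) ρ c ↔ c = b := by
  refine ⟨fun hc => ?_, fun hc => hc ▸ hρ⟩
  obtain ⟨ρ', hne, hlen', hpre', hthick⟩ := hμ.exists_thick_ne hσ hℓ ρ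
  have htake : ρ'.take σ.length = ρ.take σ.length := by
    rw [← List.prefix_iff_eq_take.1 hpre', ← List.prefix_iff_eq_take.1 hpre]
  have hlen'' := hlen'.trans hlen.symm
  exact (hc ρ' hlen'' htake hne hthick).symm.trans (hρ ρ' hlen'' htake hne hthick)

/-- The length of the string which codes the first `k` bits, when the coding starts at thickness
level `c`. Consecutive lengths differ by at least `(c + k) + 2`, as `FairCoin.exists_thick_ne`
requires. -/
def codeLength (c k : ℕ) : ℕ := k * (k + c + 1)

theorem codeLength_succ (c k : ℕ) : codeLength c (k + 1) = codeLength c k + (2 * k + c + 2) := by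
  simp only [codeLength]
  ring

theorem le_codeLength (c k : ℕ) : k ≤ codeLength c k := Nat.le_mul_of_pos_right k (by omega)

theorem primrec_codeLength (c : ℕ) : Primrec (codeLength c) :=
  Primrec.nat_mul.comp Primrec.id
    (Primrec.succ.comp (Primrec.nat_add.comp Primrec.id (Primrec.const c)))

theorem FairCoin.exists_coding (hμ : FairCoin μ) (hS : CEPred (· ∈ S)) {A : Seq}
    (hA : TuringLE (oracleOfSet haltingSet) (oracleOf A)) {c : ℕ}
    (hc : Thick μ (openClass S) c []) :
    ∃ s : ℕ → Str, ComputableIn (oracleOf A) s ∧ ∀ k,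
      ((s k).length = codeLength c k ∧ Thick μ (openClass S) (c + k) (s k)) ∧
      s k <+: s (k + 1) ∧
      Extremal μ (openClass S) (codeLength c k) (c + k + 1) (s (k + 1)) (A k) := by
  have hadd : Primrec fun k => c + k := Primrec.nat_add.comp (.const c) .id
  have hlevel : Primrec fun x : ℕ × Str => (c + x.1, x.2) := (hadd.comp .fst).pair .snd
  have hlen : PrimrecPred fun x : ℕ × Str => x.2.length = codeLength c x.1 :=
    Primrec.eq.comp (Primrec.list_length.comp .snd) ((primrec_codeLength c).comp .fst)
  have hP := (DecidableIn.of_primrecPred hlen).and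
    ((hμ.decidableIn_thick hS hA).comp (.of_primrec hlevel))
  have hprefix : PrimrecPred fun x : (ℕ × Str) × Str => x.1.2 <+: x.2 :=
    (Primrec.eq.comp (Primrec.snd.comp .fst) (Primrec.list_take.comp
      (Primrec.list_length.comp (Primrec.snd.comp .fst)) .snd)).of_eq fun _ =>
        List.prefix_iff_eq_take.symm
  have hindex : Primrec fun x : (ℕ × Str) × Str => ((codeLength c x.1.1, c + x.1.1 + 1), x.2) :=
    (((primrec_codeLength c).comp (Primrec.fst.comp .fst)).pair
      (Primrec.succ.comp (hadd.comp (Primrec.fst.comp .fst)))).pair .snd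
  have hr := (DecidableIn.of_primrecPred hprefix).and
    (((hμ.cePred_extremal hS).decidableIn hA).comp ((ComputableIn.of_primrec hindex).pair
      ((computableIn_oracleOf A).comp (.of_primrec (Primrec.fst.comp .fst)))))
  have hstep (k : ℕ) (σ : Str) (hσ : σ.length = codeLength c k ∧ Thick μ (openClass S) (c + k) σ) :
      ∃ ρ, (ρ.length = codeLength c (k + 1) ∧ Thick μ (openClass S) (c + (k + 1)) ρ) ∧
        σ <+: ρ ∧ Extremal μ (openClass S) (codeLength c k) (c + k + 1) ρ (A k) := by
    obtain ⟨ρ₀, -, hρ₀⟩ := hμ.exists_thick_ne hσ.2 (ℓ := 2 * k + c + 2) (by omega) []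
    obtain ⟨ρ, hlen, hpre, hρ, hextremal⟩ := exists_extremal (A k) ⟨ρ₀, hρ₀⟩
    exact ⟨ρ, ⟨by rw [hlen, hσ.1, codeLength_succ], hρ⟩, hpre, hσ.1 ▸ hextremal⟩
  exact hP.exists_chain hr (x₀ := []) ⟨by simp [codeLength], hc⟩ hstep

theorem ComputableIn.exists_pre_eq {O : ℕ →. ℕ} {s : ℕ → Str} (hs : ComputableIn O s)
    (hchain : ∀ k, s k <+: s (k + 1)) (hlen : ∀ k, k ≤ (s k).length) :
    ∃ R : Seq, ComputableIn O R ∧ ∀ k, pre R (s k).length = s k := by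
  have hmono {j k : ℕ} (h : j ≤ k) : s j <+: s k := by
    induction k, h using Nat.le_induction with
    | base => exact List.prefix_rfl
    | succ k _ ih => exact ih.trans (hchain k)
  refine ⟨fun n => (s (n + 1)).getD n false, ?_, fun k => ?_⟩
  · exact (ComputableIn.of_primrec ((Primrec.list_getD false).comp Primrec.fst Primrec.snd)).comp
      ((hs.comp (.of_primrec Primrec.succ)).pair (.of_primrec Primrec.id))
  · refine List.ext_getElem (length_pre _ _) fun i _ hi => ?_
    have hi' : i < (s (i + 1)).length := hlen (i + 1)
    simp only [pre, List.getElem_ofFn, List.getD_eq_getElem _ _ hi']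
    rcases le_total (i + 1) k with h | h
    · exact (hmono h).getElem hi'
    · exact ((hmono h).getElem hi).symm

theorem FairCoin.computableIn_of_coding (hμ : FairCoin μ) (hS : CEPred (· ∈ S)) {A R : Seq} {c : ℕ}
    (hthick : ∀ k, Thick μ (openClass S) (c + k) (pre R (codeLength c k)))
    (hextremal : ∀ k, Extremal μ (openClass S) (codeLength c k) (c + k + 1)
      (pre R (codeLength c (k + 1))) (A k)) :
    ComputableIn (oracleOf R) A := by
  have hindex : Primrec fun k => (codeLength c k, c + k + 1) :=
    (primrec_codeLength c).pair
      (Primrec.succ.comp (Primrec.nat_add.comp (Primrec.const c) Primrec.id))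
  have hblock : ComputableIn (oracleOf R) fun k => pre R (codeLength c (k + 1)) :=
    (computableIn_pre R).comp (.of_primrec ((primrec_codeLength c).comp Primrec.succ))
  refine (hμ.cePred_extremal hS).computableIn_of_graph
    ((ComputableIn.of_primrec hindex).pair hblock) fun k b => ?_
  have hlen := codeLength_succ c k
  have hprefix : pre R (codeLength c k) <+: pre R (codeLength c (k + 1)) :=
    (prefix_pre_iff (by rw [length_pre]; omega)).2 (mem_cyl_pre R _)
  simpa only [length_pre] using hμ.extremal_iff_eq (hthick k) (ℓ := 2 * k + c + 2) (by omega)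
    (by simpa only [length_pre]) hprefix (by simpa only [length_pre] using hextremal k) b

theorem notMem_openClass_of_thick {m n : ℕ → ℕ} {R : Seq} (hn : ∀ k, k ≤ n k)
    (hthick : ∀ k, Thick μ (openClass S) (m k) (pre R (n k))) : R ∉ openClass S := fun hR => by
  obtain ⟨σ, hσ, hRσ⟩ := mem_openClass.1 hR
  refine (hthick σ.length).not_cyl_subset ?_
  exact (cyl_subset_cyl ((prefix_pre_iff (hn _)).2 hRσ)).trans (subset_biUnion_of_mem hσ)

theorem FairCoin.exists_notMem_openClass_turingLE (hμ : FairCoin μ) (hS : CEPred (· ∈ S))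
    (hlt : μ (openClass S) < 1) {A : Seq} (hA : TuringLE (oracleOfSet haltingSet) (oracleOf A)) :
    ∃ R ∉ openClass S, TuringLE (oracleOf R) (oracleOf A) ∧ TuringLE (oracleOf A) (oracleOf R) := by
  obtain ⟨c, hc⟩ := hμ.exists_thick_nil (measurableSet_openClass S) hlt
  obtain ⟨s, hs, hcoding⟩ := hμ.exists_coding hS hA hc
  simp only [forall_and] at hcoding
  obtain ⟨⟨hlen, hthick⟩, hchain, hextremal⟩ := hcoding
  obtain ⟨R, hR, hpre⟩ := hs.exists_pre_eq hchain fun k => (hlen k).symm ▸ le_codeLength c k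
  obtain rfl : s = fun k => pre R (codeLength c k) := funext fun k => by rw [← hlen, hpre]
  exact ⟨R, notMem_openClass_of_thick (le_codeLength c) hthick, computableIn_iff_turingLE.1 hR,
    computableIn_iff_turingLE.1 (hμ.computableIn_of_coding hS hthick hextremal)⟩

end KuceraCoding

/-- **Kučera**: every sequence computing the halting problem is Turing equivalent to a
Martin-Löf random sequence; hence every Turing degree above `0'` contains a
Martin-Löf random sequence. -/
theorem kucera_above_jump (μ : MeasureTheory.Measure Seq) (hμ : FairCoin μ)
    (A : Seq) (hA : TuringLE (oracleOfSet haltingSet) (oracleOf A)) :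
    ∃ R : Seq, MLRandom μ R ∧
      TuringLE (oracleOf R) (oracleOf A) ∧ TuringLE (oracleOf A) (oracleOf R) := by
  obtain ⟨S, hS, hlt, hrandom⟩ := hμ.exists_universal_openClass
  obtain ⟨R, hR, hRA, hAR⟩ := hμ.exists_notMem_openClass_turingLE hS hlt hA
  exact ⟨R, hrandom R hR, hRA, hAR⟩

end AR
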